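/- arXiv:2001.04670 — 3 statements merged into one kernel-verified Lean document; each statement's English description precedes it below -/
import Mathlib

section
/- Let C1 and C2 be nonzero 𝔽₂-linear subspaces of 𝔽₂^m with minimum distances d1 and d2 respectively (the minimum distance of a nonzero linear code is the minimum Hamming weight of a nonzero element). Then C = { (u + v, v) ∈ 𝔽₂^{2m} : u ∈ C1, v ∈ C2 } is a nonzero 𝔽₂-linear subspace of 𝔽₂^{2m} whose minimum distance equals min(d1, 2·d2). -/
/-!
The weight of `(u + v, v)` is `wt (u + v) + wt v`. If `u ≠ 0`, the triangle inequality bounds it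
below by `wt u ≥ d₁`; if `u = 0`, it equals `2 wt v ≥ 2 d₂`. Both bounds are attained, by `(u, 0)`
and `(v, v)` with `u` and `v` of minimum weight.
-/

open Matrix

/-- Minimum distance of a nonzero `𝔽₂`-linear code `C ⊆ 𝔽₂^m`:
the least Hamming weight of a nonzero element of `C`. -/
noncomputable def minDistS {m : ℕ} (C : Submodule (ZMod 2) (Fin m → ZMod 2)) : ℕ :=
  sInf {w : ℕ | ∃ x ∈ C, x ≠ 0 ∧ hammingNorm x = w}

theorem hammingNorm_append {m n : ℕ} (a : Fin m → ZMod 2) (b : Fin n → ZMod 2) :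
    hammingNorm (Fin.append a b) = hammingNorm a + hammingNorm b := by
  simp only [hammingNorm, Finset.card_filter, Fin.sum_univ_add, Fin.append_left,
    Fin.append_right]

theorem minDistS_le {m : ℕ} {C : Submodule (ZMod 2) (Fin m → ZMod 2)} {x : Fin m → ZMod 2}
    (hx : x ∈ C) (h0 : x ≠ 0) : minDistS C ≤ hammingNorm x :=
  Nat.sInf_le ⟨x, hx, h0, rfl⟩

theorem exists_hammingNorm_eq_minDistS {m : ℕ} {C : Submodule (ZMod 2) (Fin m → ZMod 2)}
    (h : C ≠ ⊥) : ∃ x ∈ C, x ≠ 0 ∧ hammingNorm x = minDistS C := by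
  obtain ⟨x, hx, h0⟩ := Submodule.exists_mem_ne_zero_of_ne_bot h
  exact Nat.sInf_mem (s := {w : ℕ | ∃ x ∈ C, x ≠ 0 ∧ hammingNorm x = w}) ⟨_, x, hx, h0, rfl⟩

theorem hammingNorm_le_add {m : ℕ} (u v : Fin m → ZMod 2) :
    hammingNorm u ≤ hammingNorm (u + v) + hammingNorm v := by
  have h := hammingDist_triangle v 0 (u + v)
  rwa [hammingDist_eq_hammingNorm v (u + v), show -v + (u + v) = u by abel,
    hammingDist_zero_right, hammingDist_zero_left, add_comm] at h

/-- The code `{(u + v, v) : u ∈ C1, v ∈ C2}`. -/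
def plotkin {m : ℕ} (C1 C2 : Submodule (ZMod 2) (Fin m → ZMod 2)) :
    Submodule (ZMod 2) (Fin (m + m) → ZMod 2) where
  carrier := {w | ∃ u ∈ C1, ∃ v ∈ C2, w = Fin.append (u + v) v}
  zero_mem' := by
    refine ⟨0, C1.zero_mem, 0, C2.zero_mem, ?_⟩
    ext i
    refine Fin.addCases (fun i => ?_) (fun i => ?_) i <;> simp [-Fin.natAdd_eq_addNat]
  add_mem' := by
    rintro _ _ ⟨u, hu, v, hv, rfl⟩ ⟨u', hu', v', hv', rfl⟩
    refine ⟨u + u', C1.add_mem hu hu', v + v', C2.add_mem hv hv', ?_⟩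
    ext i
    refine Fin.addCases (fun i => ?_) (fun i => ?_) i
    · simp only [Pi.add_apply, Fin.append_left]
      ring
    · simp only [Pi.add_apply, Fin.append_right]
  smul_mem' := by
    rintro c _ ⟨u, hu, v, hv, rfl⟩
    refine ⟨c • u, C1.smul_mem c hu, c • v, C2.smul_mem c hv, ?_⟩
    ext i
    refine Fin.addCases (fun i => ?_) (fun i => ?_) i <;> simp [mul_add, -Fin.natAdd_eq_addNat]

/-- Distance property of the `(u | u+v)` (Plotkin) construction. -/
theorem stmt1 (m : ℕ) (C1 C2 : Submodule (ZMod 2) (Fin m → ZMod 2))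
    (h1 : C1 ≠ ⊥) (h2 : C2 ≠ ⊥) :
    ∃ C : Submodule (ZMod 2) (Fin (m + m) → ZMod 2),
      (C : Set (Fin (m + m) → ZMod 2)) =
        {w | ∃ u ∈ C1, ∃ v ∈ C2, w = Fin.append (u + v) v} ∧
      C ≠ ⊥ ∧
      minDistS C = min (minDistS C1) (2 * minDistS C2) := by
  obtain ⟨u, hu, hu0, hud⟩ := exists_hammingNorm_eq_minDistS h1
  obtain ⟨v, hv, hv0, hvd⟩ := exists_hammingNorm_eq_minDistS h2
  have hmem1 : Fin.append (u + 0) 0 ∈ plotkin C1 C2 := ⟨u, hu, 0, C2.zero_mem, rfl⟩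
  have hmem2 : Fin.append (0 + v) v ∈ plotkin C1 C2 := ⟨0, C1.zero_mem, v, hv, rfl⟩
  have hne1 : Fin.append (u + 0) (0 : Fin m → ZMod 2) ≠ 0 := by
    rw [← hammingNorm_ne_zero_iff, hammingNorm_append, add_zero, hammingNorm_zero, add_zero]
    exact hammingNorm_ne_zero_iff.2 hu0
  have hne2 : Fin.append (0 + v) v ≠ 0 := by
    have := hammingNorm_ne_zero_iff.2 hv0
    rw [← hammingNorm_ne_zero_iff, hammingNorm_append, zero_add]
    omega
  have hbot : plotkin C1 C2 ≠ ⊥ := fun h => hne1 (by rwa [h, Submodule.mem_bot] at hmem1)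
  refine ⟨plotkin C1 C2, rfl, hbot, le_antisymm (le_min ?_ ?_) ?_⟩
  · have := minDistS_le hmem1 hne1
    rwa [hammingNorm_append, add_zero, hammingNorm_zero, add_zero, hud] at this
  · have := minDistS_le hmem2 hne2
    rw [hammingNorm_append, zero_add, hvd] at this
    omega
  · obtain ⟨_, ⟨a, ha, b, hb, rfl⟩, hw0, hwd⟩ := exists_hammingNorm_eq_minDistS hbot
    rw [← hwd, hammingNorm_append]
    by_cases ha0 : a = 0
    · subst ha0
      have hb0 : b ≠ 0 := by
        rintro rfl
        apply hw0
        rw [← hammingNorm_eq_zero, hammingNorm_append]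
        simp
      have := minDistS_le hb hb0
      rw [zero_add, ← two_mul]
      exact (min_le_right _ _).trans (by omega)
    · exact (min_le_left _ _).trans ((minDistS_le ha ha0).trans (hammingNorm_le_add a b))
end

section
/- For the 3×3 binary kernel T_3 = [[1,1,1],[1,0,1],[0,1,1]], the minimum-distance spectrum is S_{T_3} = (3, 2, 1): S_{T_3}(1) = 3, attained by the row set {0}; S_{T_3}(2) = 2, attained by the row set {1,2}; and S_{T_3}(3) = 1, attained by {0,1,2}. -/
/-!
The code generated by the rows in `R` consists of the sums `∑ i ∈ R, c i • T i` over coefficient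
vectors `c`, so bounds on its minimum distance reduce to finite checks over `c`. A lower bound is
needed only for the three optimal row sets: the code of `{0}` is `{000, 111}`, that of `{1, 2}` is
`{000, 101, 011, 110}`, and the full row set has minimum distance at least `1` as any nonzero
word does. The upper bound on the spectrum comes from a light nonzero codeword for every row set
of the given size.
-/

open Matrix

/-- The ternary kernel `T₃`. -/
def T3 : Matrix (Fin 3) (Fin 3) (ZMod 2) := !![1, 1, 1; 1, 0, 1; 0, 1, 1]

/-- Minimum distance of the code generated by the rows of `T` indexed by `R`:
the least Hamming weight of a nonzero vector in the `𝔽₂`-span of those rows. -/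
noncomputable def minDist {p m : ℕ} (T : Matrix (Fin p) (Fin m) (ZMod 2))
    (R : Finset (Fin p)) : ℕ :=
  sInf {w : ℕ | ∃ x ∈ Submodule.span (ZMod 2) ((fun i => T i) '' (R : Set (Fin p))),
    x ≠ 0 ∧ hammingNorm x = w}

/-- Minimum-distance spectrum: `spec T k` is the largest minimum distance achievable
by a sub-code generated by `k` rows of `T`. -/
noncomputable def spec {p m : ℕ} (T : Matrix (Fin p) (Fin m) (ZMod 2)) (k : ℕ) : ℕ :=
  ((Finset.univ : Finset (Fin p)).powersetCard k).sup (minDist T)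

/-- A nonzero combination of the rows in `R` of weight at most `d` bounds the minimum distance. -/
theorem minDist_le {p m : ℕ} {T : Matrix (Fin p) (Fin m) (ZMod 2)} {R : Finset (Fin p)} {d : ℕ}
    (h : ∃ c : Fin p → ZMod 2, ∑ i ∈ R, c i • T i ≠ 0 ∧ hammingNorm (∑ i ∈ R, c i • T i) ≤ d) :
    minDist T R ≤ d := by
  obtain ⟨c, hc, hd⟩ := h
  refine le_trans (Nat.sInf_le ?_) hd
  exact ⟨_, (Submodule.mem_span_image_finset_iff_exists_fun' (ZMod 2)).2 ⟨c, rfl⟩, hc, rfl⟩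

/-- The existence hypothesis excludes the zero code, for which `minDist` is the junk value
`sInf ∅ = 0`. -/
theorem le_minDist {p m : ℕ} {T : Matrix (Fin p) (Fin m) (ZMod 2)} {R : Finset (Fin p)} {d : ℕ}
    (hne : ∃ c : Fin p → ZMod 2, ∑ i ∈ R, c i • T i ≠ 0)
    (h : ∀ c : Fin p → ZMod 2, ∑ i ∈ R, c i • T i ≠ 0 →
      d ≤ hammingNorm (∑ i ∈ R, c i • T i)) :
    d ≤ minDist T R := by
  obtain ⟨c, hc⟩ := hne
  refine le_csInf
    ⟨_, _, (Submodule.mem_span_image_finset_iff_exists_fun' (ZMod 2)).2 ⟨c, rfl⟩, hc, rfl⟩ ?_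
  rintro w ⟨x, hx, hx0, rfl⟩
  obtain ⟨c, rfl⟩ := (Submodule.mem_span_image_finset_iff_exists_fun' (ZMod 2)).1 hx
  exact h c hx0

/-- If every row set of size `k` has minimum distance at most `d`, and the row set `R` of size `k`
has minimum distance at least `d`, then `R` attains the value `d` of the spectrum at `k`. -/
theorem spec_eq_and_minDist_eq {p m : ℕ} {T : Matrix (Fin p) (Fin m) (ZMod 2)} {k d : ℕ}
    {R : Finset (Fin p)} (hR : R ∈ (Finset.univ : Finset (Fin p)).powersetCard k)
    (hle : ∀ R' ∈ (Finset.univ : Finset (Fin p)).powersetCard k, minDist T R' ≤ d)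
    (hge : d ≤ minDist T R) : spec T k = d ∧ minDist T R = d :=
  ⟨le_antisymm (Finset.sup_le hle) (hge.trans (Finset.le_sup hR)), le_antisymm (hle R hR) hge⟩

/-- The minimum-distance spectrum of `T₃` is `(3,2,1)`, attained by the row sets
`{0}`, `{1,2}` and `{0,1,2}`. -/
theorem stmt7 :
    spec T3 1 = 3 ∧ minDist T3 ({0} : Finset (Fin 3)) = 3 ∧
    spec T3 2 = 2 ∧ minDist T3 ({1, 2} : Finset (Fin 3)) = 2 ∧
    spec T3 3 = 1 ∧ minDist T3 ({0, 1, 2} : Finset (Fin 3)) = 1 := by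
  have h1 : spec T3 1 = 3 ∧ minDist T3 ({0} : Finset (Fin 3)) = 3 :=
    spec_eq_and_minDist_eq (by decide) (fun R hR => minDist_le (by revert R; decide))
      (le_minDist (by decide) (by decide))
  have h2 : spec T3 2 = 2 ∧ minDist T3 ({1, 2} : Finset (Fin 3)) = 2 :=
    spec_eq_and_minDist_eq (by decide) (fun R hR => minDist_le (by revert R; decide))
      (le_minDist (by decide) (by decide))
  have h3 : spec T3 3 = 1 ∧ minDist T3 ({0, 1, 2} : Finset (Fin 3)) = 1 :=
    spec_eq_and_minDist_eq (by decide) (fun R hR => minDist_le (by revert R; decide))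
      (le_minDist (by decide) fun _ hc => hammingNorm_pos_iff.2 hc)
  exact ⟨h1.1, h1.2, h2.1, h2.2, h3.1, h3.2⟩
end

section
/- Let T = T_5 = [[1,1,1,1,1],[1,0,0,0,0],[1,0,0,1,0],[1,1,1,0,0],[0,0,1,1,1]]. For all L_0,…,L_4 ∈ ℝ, the exact successive-cancellation LLR of the first input bit is λ_0 = 2·artanh(tanh(L_1/2)·tanh(L_2/2)·tanh(L_4/2)); in particular it depends only on L_1, L_2 and L_4. -/
/-!
The parity `x₁ + x₂ + x₄` vanishes on rows `1, …, 4` of `T₅` and equals `1` on row `0`. Since `T₅` is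
invertible, the codewords with first input bit `a` are exactly the `x` with `x₁ + x₂ + x₄ = a`,
while `x₀` and `x₃` are unconstrained. With `E_t = exp L_t`, each sum in the LLR therefore factors as
`(1 + E₀)(1 + E₃) S_a` (`sum_zero`, `sum_one`), where `S_a` is the weight of the words
`(x₁, x₂, x₄)` of parity `a`. The common factor cancels, and `S₀ ± S₁ = ∏ (E_t ± 1)` over
`t ∈ {1, 2, 4}` together with `tanh (L_t / 2) = (E_t - 1) / (E_t + 1)` gives the claim.
-/


open Matrix

/-- The kernel `T₅`. -/
def T5 : Matrix (Fin 5) (Fin 5) (ZMod 2) :=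
  !![1, 1, 1, 1, 1;
     1, 0, 0, 0, 0;
     1, 0, 0, 1, 0;
     1, 1, 1, 0, 0;
     0, 0, 1, 1, 1]

/-- Inverse hyperbolic tangent. -/
noncomputable def artanh (x : ℝ) : ℝ := Real.log ((1 + x) / (1 - x)) / 2

/-- Exact successive-cancellation LLR `λ_i` for the kernel `T`, channel LLRs `L`,
and previously decided bits `uhat 0, …, uhat (i-1)`:
`λ_i = ln ( Σ_{x ∈ X₀⁽ⁱ⁾} exp(Σ_t (1 - x_t) L_t) / Σ_{x ∈ X₁⁽ⁱ⁾} exp(Σ_t (1 - x_t) L_t) )`,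
where `X_a⁽ⁱ⁾` is the family of codewords `x = v · T` with `v t = uhat t` for `t < i`,
`v i = a`, and the remaining bits of `v` free. -/
noncomputable def scLLR {p : ℕ} (T : Matrix (Fin p) (Fin p) (ZMod 2)) (L : Fin p → ℝ)
    (uhat : Fin p → ZMod 2) (i : Fin p) : ℝ :=
  Real.log
    ((∑ v ∈ Finset.univ.filter (fun v : Fin p → ZMod 2 =>
        (∀ t, t < i → v t = uhat t) ∧ v i = 0),
      Real.exp (∑ t, (1 - (((v ᵥ* T) t).val : ℝ)) * L t)) /
     (∑ v ∈ Finset.univ.filter (fun v : Fin p → ZMod 2 =>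
        (∀ t, t < i → v t = uhat t) ∧ v i = 1),
      Real.exp (∑ t, (1 - (((v ᵥ* T) t).val : ℝ)) * L t)))

/-- Split off the first bit in a sum over binary vectors. -/
lemma sum_bits_succ {n : ℕ} (g : (Fin (n + 1) → ZMod 2) → ℝ) :
    ∑ v, g v = ∑ w : Fin n → ZMod 2, (g (vecCons 0 w) + g (vecCons 1 w)) := by
  rw [← (Fin.consEquiv (fun _ : Fin (n + 1) => ZMod 2)).sum_comp g, Fintype.sum_prod_type,
    Finset.sum_add_distrib]
  exact Fin.sum_univ_two (fun a : Fin 2 =>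
    ∑ w : Fin n → ZMod 2, g ((Fin.consEquiv (fun _ : Fin (n + 1) => ZMod 2)) (a, w)))

/-- For the first input bit no bit has been decided, so the sum ranges over all words starting
with `a`. -/
lemma sum_first_bit (a : ZMod 2) (uhat : Fin 5 → ZMod 2) (g : (Fin 5 → ZMod 2) → ℝ) :
    ∑ v ∈ Finset.univ.filter (fun v : Fin 5 → ZMod 2 =>
        (∀ t, t < 0 → v t = uhat t) ∧ v 0 = a), g v
      = ∑ w : Fin 4 → ZMod 2, g (vecCons a w) := by
  rw [Finset.sum_filter, sum_bits_succ]
  refine Finset.sum_congr rfl fun w _ => ?_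
  have ha : a = 0 ∨ a = 1 := by revert a; decide
  rcases ha with rfl | rfl <;> simp

/-- The weight of a word `x` is the product of the weights of its bits, `E_t` for `x_t = 0` and `1`
for `x_t = 1`. -/
lemma exp_weight (L : Fin 5 → ℝ) (x : Fin 5 → ZMod 2) :
    Real.exp (∑ t, (1 - ((x t).val : ℝ)) * L t)
      = ∏ t, if x t = 0 then Real.exp (L t) else 1 := by
  rw [Real.exp_sum]
  refine Finset.prod_congr rfl fun t _ => ?_
  have h : x t = 0 ∨ x t = 1 := by generalize x t = a; revert a; decide
  rcases h with h | h <;> simp [h, ZMod.val_one]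

lemma encode_T5 (a b c d e : ZMod 2) :
    ![a, b, c, d, e] ᵥ* T5 = ![a + b + c + d, a + d, a + d + e, a + c + e, a + e] := by
  revert a b c d e; decide

lemma sum_zero (L : Fin 5 → ℝ) (uhat : Fin 5 → ZMod 2) :
    ∑ v ∈ Finset.univ.filter (fun v : Fin 5 → ZMod 2 =>
        (∀ t, t < 0 → v t = uhat t) ∧ v 0 = 0),
      Real.exp (∑ t, (1 - (((v ᵥ* T5) t).val : ℝ)) * L t)
    = (1 + Real.exp (L 0)) * (1 + Real.exp (L 3)) *
      (Real.exp (L 1) * Real.exp (L 2) * Real.exp (L 4)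
        + Real.exp (L 1) + Real.exp (L 2) + Real.exp (L 4)) := by
  have h2 : (1 + 1 : ZMod 2) = 0 := by decide
  rw [sum_first_bit]
  simp only [exp_weight, sum_bits_succ, Finset.univ_unique, Finset.sum_singleton,
    Matrix.empty_eq, encode_T5]
  simp [Fin.prod_univ_five, h2]
  ring

lemma sum_one (L : Fin 5 → ℝ) (uhat : Fin 5 → ZMod 2) :
    ∑ v ∈ Finset.univ.filter (fun v : Fin 5 → ZMod 2 =>
        (∀ t, t < 0 → v t = uhat t) ∧ v 0 = 1),
      Real.exp (∑ t, (1 - (((v ᵥ* T5) t).val : ℝ)) * L t)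
    = (1 + Real.exp (L 0)) * (1 + Real.exp (L 3)) *
      (1 + Real.exp (L 1) * Real.exp (L 2) + Real.exp (L 1) * Real.exp (L 4)
        + Real.exp (L 2) * Real.exp (L 4)) := by
  have h2 : (1 + 1 : ZMod 2) = 0 := by decide
  rw [sum_first_bit]
  simp only [exp_weight, sum_bits_succ, Finset.univ_unique, Finset.sum_singleton,
    Matrix.empty_eq, encode_T5]
  simp [Fin.prod_univ_five, h2]
  ring

lemma tanh_half (y : ℝ) : Real.tanh (y / 2) = (Real.exp y - 1) / (Real.exp y + 1) := by
  have h : Real.exp y = Real.exp (y / 2) * Real.exp (y / 2) := by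
    rw [← Real.exp_add]; ring_nf
  have hp := Real.exp_pos (y / 2)
  rw [Real.tanh_eq, Real.exp_neg, h]
  field_simp

/-- Reduced form of the exact SC LLR `λ₀` for the kernel `T₅`; it depends only on
`L₁`, `L₂` and `L₄`. -/
theorem stmt13 (L : Fin 5 → ℝ) (uhat : Fin 5 → ZMod 2) :
    scLLR T5 L uhat 0 =
      2 * artanh (Real.tanh (L 1 / 2) * Real.tanh (L 2 / 2) * Real.tanh (L 4 / 2)) := by
  rw [scLLR, sum_zero, sum_one, artanh, tanh_half, tanh_half, tanh_half,
    mul_div_cancel₀ _ (two_ne_zero)]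
  have h0 := Real.exp_pos (L 0)
  have h1 := Real.exp_pos (L 1)
  have h2 := Real.exp_pos (L 2)
  have h3 := Real.exp_pos (L 3)
  have h4 := Real.exp_pos (L 4)
  generalize Real.exp (L 0) = A at *
  generalize Real.exp (L 1) = B at *
  generalize Real.exp (L 2) = C at *
  generalize Real.exp (L 3) = D at *
  generalize Real.exp (L 4) = E at *
  congr 1
  rw [mul_div_mul_left _ _ (by positivity : (1 + A) * (1 + D) ≠ 0)]
  have hQ : (B + 1) * (C + 1) * (E + 1) ≠ 0 := by positivity
  -- `1 ± ∏ (E_t - 1) / (E_t + 1)` equals `2 S₀ / ∏ (E_t + 1)`, respectively `2 S₁ / ∏ (E_t + 1)`.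
  have hnum : 1 + (B - 1) / (B + 1) * ((C - 1) / (C + 1)) * ((E - 1) / (E + 1))
      = 2 * (B * C * E + B + C + E) / ((B + 1) * (C + 1) * (E + 1)) := by
    field_simp; ring
  have hden : 1 - (B - 1) / (B + 1) * ((C - 1) / (C + 1)) * ((E - 1) / (E + 1))
      = 2 * (1 + B * C + B * E + C * E) / ((B + 1) * (C + 1) * (E + 1)) := by
    field_simp; ring
  rw [hnum, hden, div_div_div_cancel_right₀ hQ, mul_div_mul_left _ _ two_ne_zero]
end
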